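/- arXiv:1906.00457 — 2 statements merged into one kernel-verified Lean document; each statement's English description precedes it below -/
import Mathlib

section
/- Suppose n ≥ 2. For any 1 ≤ p,q ≤ n, the map which excises from a matrix A every row labeled by a multi-index containing p and every column labeled by a multi-index containing q, and then re-indexes {1,…,p-1,p+1,…,n} and {1,…,q-1,q+1,…,n} to match {1,…,n-1}, is a k-linear isomorphism from E_k(n,r)^p_q onto E_k(n-1,r). -/
/-!
For a special invariant `A`, the entry `A s t` vanishes unless the places where `s` takes the
value `p` are exactly the places where `t` takes the value `q`. Hence a slice sum of `A` along a
row (or column) avoiding `p` (or `q`) at the place involved is a slice sum of the excised matrix,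
so excision preserves (G). In a slice along a row with value `p` there is only one nonzero entry,
the one in the column with value `q`; by (G) it equals a slice sum of entries with fewer
occurrences of `p` (`MemESpec.apply_eq_sum`). Induction on the number of occurrences shows that
`A` is determined by its excision.

Conversely, this recursion says what the inverse has to be: on matched indices, `A s t` is
the sum of `C u w` over all `u` extending the part of `s` avoiding `p`, where `w` is any extension
of the part of `t` avoiding `q` (`unexcise`). Condition (G) for `C` makes the sum independent of
`w` and gives (G) for `A`; both facts come from `sum_piFinset_row`.
-/

open Finset

/-- The value-type of a multi-index `i ∈ I(n,r)`, encoded as the equivalence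
relation on places whose classes are the blocks `{α : i α = v}`. -/
def vt {n r : ℕ} (i : Fin r → Fin n) : Fin r → Fin r → Prop :=
  fun a b => i a = i b

/-- Condition (G): for each place `α` and each pair of multi-indices obtained by
deleting place `α`, all row and column `α`-slice sums equal a common scalar. -/
def CondG (k : Type*) [CommRing k] (n r : ℕ)
    (A : Matrix (Fin r → Fin n) (Fin r → Fin n) k) : Prop :=
  ∀ (α : Fin r) (i j : Fin r → Fin n), ∃ b : k,
    (∀ y : Fin n, (∑ x : Fin n, A (Function.update i α x) (Function.update j α y)) = b) ∧
    (∀ x : Fin n, (∑ y : Fin n, A (Function.update i α x) (Function.update j α y)) = b)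

/-- Condition (H): entries vanish when row and column indices have different value-types. -/
def CondH (k : Type*) [CommRing k] (n r : ℕ)
    (A : Matrix (Fin r → Fin n) (Fin r → Fin n) k) : Prop :=
  ∀ i j : Fin r → Fin n, vt i ≠ vt j → A i j = 0

/-- Condition (S): invariance under simultaneous place permutation of rows and columns. -/
def CondS (k : Type*) [CommRing k] (n r : ℕ)
    (A : Matrix (Fin r → Fin n) (Fin r → Fin n) k) : Prop :=
  ∀ (σ : Equiv.Perm (Fin r)) (i j : Fin r → Fin n), A (i ∘ σ) (j ∘ σ) = A i j

/-- Membership in the centralizer algebra `E_k(n,r) = End_{P_r(n)}(V^{⊗r})`. -/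
def MemE (k : Type*) [CommRing k] (n r : ℕ)
    (A : Matrix (Fin r → Fin n) (Fin r → Fin n) k) : Prop :=
  CondG k n r A ∧ CondH k n r A ∧ CondS k n r A

/-- The restriction `ρ(A) ∈ Mat_{I(n,r-1)}(k)`: its `(p,q)`-entry is the slice sum
`Σ_x a^{p x}_{q 0}`, which for `A ∈ E_k(n,r)` is the common value of all slice
sums of `A` indexed by `p, q`. -/
def rho (k : Type*) [CommRing k] (n r : ℕ) [NeZero n]
    (A : Matrix (Fin (r+1) → Fin n) (Fin (r+1) → Fin n) k) :
    Matrix (Fin r → Fin n) (Fin r → Fin n) k :=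
  Matrix.of fun p q => ∑ x : Fin n, A (Fin.snoc p x) (Fin.snoc q 0)

/-- The `k`-module `E_k(n,r)^i_j` of special invariants: those `A ∈ E_k(n,r)` such
that `A s t ≠ 0` implies `Λ_i(s) = Λ_j(t)`. -/
def MemESpec (k : Type*) [CommRing k] (n r : ℕ) (i j : Fin n)
    (A : Matrix (Fin r → Fin n) (Fin r → Fin n) k) : Prop :=
  MemE k n r A ∧ ∀ s t : Fin r → Fin n, A s t ≠ 0 → ∀ α : Fin r, s α = i ↔ t α = j

/-- The `r`-th Kronecker power `P(w)^{⊗r}` of the permutation matrix of `w`. -/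
def kron (k : Type*) [CommRing k] (n r : ℕ) (w : Equiv.Perm (Fin n)) :
    Matrix (Fin r → Fin n) (Fin r → Fin n) k :=
  Matrix.of fun i j => if i = ⇑w ∘ j then 1 else 0

/-- The excision map `η^p_q`: delete every row whose multi-index contains `p` and
every column whose multi-index contains `q`, re-indexing the remaining values of
`{1,…,n} \ {p}` resp. `{1,…,n} \ {q}` by `{1,…,n-1}` via the order-preserving
bijections (i.e. via `Fin.succAbove`).  Here `n ≥ 2` is represented as `m+1` with
`m ≥ 1`. -/
def excise (k : Type*) [CommRing k] (m r : ℕ) (p q : Fin (m+1))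
    (A : Matrix (Fin r → Fin (m+1)) (Fin r → Fin (m+1)) k) :
    Matrix (Fin r → Fin m) (Fin r → Fin m) k :=
  Matrix.of fun s t => A (fun α => p.succAbove (s α)) (fun α => q.succAbove (t α))

/-! ### Excision of special invariants -/

section Injectivity

variable {k : Type*} [CommRing k] {m r : ℕ} {p q : Fin (m + 1)}

lemma MemESpec.apply_eq_zero {A : Matrix (Fin r → Fin (m + 1)) (Fin r → Fin (m + 1)) k}
    (hA : MemESpec k (m + 1) r p q A) {s t : Fin r → Fin (m + 1)} (α : Fin r)
    (h : ¬ (s α = p ↔ t α = q)) : A s t = 0 := by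
  by_contra h0
  exact h (hA.2 s t h0 α)

/-- Excision preserves (G) because the entries it removes from the slices concerned are zero;
(H) and (S) are inherited directly. -/
lemma MemESpec.memE_excise {A : Matrix (Fin r → Fin (m + 1)) (Fin r → Fin (m + 1)) k}
    (hA : MemESpec k (m + 1) r p q A) : MemE k m r (excise k m r p q A) := by
  refine ⟨fun α i j => ?_, fun i j hij => ?_, fun σ i j => ?_⟩
  · obtain ⟨b, hb, hb'⟩ := hA.1.1 α (p.succAbove ∘ i) (q.succAbove ∘ j)
    have key : ∀ x y, excise k m r p q A (Function.update i α x) (Function.update j α y)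
        = A (Function.update (p.succAbove ∘ i) α (p.succAbove x))
            (Function.update (q.succAbove ∘ j) α (q.succAbove y)) := by
      intro x y
      rw [← Function.comp_update, ← Function.comp_update]
      rfl
    refine ⟨b, fun y => ?_, fun x => ?_⟩
    · rw [← hb (q.succAbove y), Fin.sum_univ_succAbove _ p,
        hA.apply_eq_zero α (by simp [Fin.succAbove_ne]), zero_add]
      simp only [key]
    · rw [← hb' (p.succAbove x), Fin.sum_univ_succAbove _ q,
        hA.apply_eq_zero α (by simp [Fin.succAbove_ne]), zero_add]
      simp only [key]
  · refine hA.1.2.1 _ _ fun h => hij ?_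
    funext a b
    have := congrFun (congrFun h a) b
    simpa [vt] using this
  · exact hA.1.2.2 σ (fun β => p.succAbove (i β)) (fun β => q.succAbove (j β))

/-- An entry of a special invariant with `p` and `q` at the place `α` is the only nonzero entry of
its `α`-slice, so (G) expresses it by entries with one occurrence of `p` fewer. -/
lemma MemESpec.apply_eq_sum {A : Matrix (Fin r → Fin (m + 1)) (Fin r → Fin (m + 1)) k}
    (hA : MemESpec k (m + 1) r p q A) {s t : Fin r → Fin (m + 1)} {α : Fin r}
    (hs : s α = p) (ht : t α = q) (y : Fin m) :
    A s t = ∑ x : Fin m, A (Function.update s α (p.succAbove x))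
      (Function.update t α (q.succAbove y)) := by
  obtain ⟨b, hb, -⟩ := hA.1.1 α s t
  have h1 := hb q
  have h2 := hb (q.succAbove y)
  rw [Fin.sum_univ_succAbove _ p, Finset.sum_eq_zero, add_zero] at h1
  · rw [Fin.sum_univ_succAbove _ p, hA.apply_eq_zero α (by simp [Fin.succAbove_ne]),
      zero_add] at h2
    rw [h2, ← h1, ← hs, ← ht, Function.update_eq_self, Function.update_eq_self]
  · intro x _
    exact hA.apply_eq_zero α (by simp [Fin.succAbove_ne])

lemma MemESpec.ext_of_excise {A B : Matrix (Fin r → Fin (m + 1)) (Fin r → Fin (m + 1)) k}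
    (hm : 1 ≤ m) (hA : MemESpec k (m + 1) r p q A) (hB : MemESpec k (m + 1) r p q B)
    (h : excise k m r p q A = excise k m r p q B) : A = B := by
  suffices H : ∀ (N : ℕ) (s t : Fin r → Fin (m + 1)), #{β | s β = p} = N → A s t = B s t by
    ext s t
    exact H _ s t rfl
  intro N
  induction N with
  | zero =>
    intro s t hs
    by_cases hst : ∀ β, s β = p ↔ t β = q
    · have hs' : ∀ β, s β ≠ p := by simpa [Finset.filter_eq_empty_iff] using hs
      choose u hu using fun β => Fin.exists_succAbove_eq (hs' β)
      choose v hv using fun β => Fin.exists_succAbove_eq (fun h => hs' β ((hst β).2 h))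
      have := congrFun (congrFun h u) v
      simpa [excise, hu, hv] using this
    · push Not at hst
      obtain ⟨β, hβ⟩ := hst
      rw [hA.apply_eq_zero β (by tauto), hB.apply_eq_zero β (by tauto)]
  | succ N ih =>
    intro s t hs
    obtain ⟨α, hα⟩ := Finset.card_pos.1 (hs.symm ▸ Nat.succ_pos N :
      0 < #{β | s β = p})
    have hsα : s α = p := by simpa using hα
    by_cases htα : t α = q
    · rw [hA.apply_eq_sum hsα htα ⟨0, hm⟩, hB.apply_eq_sum hsα htα ⟨0, hm⟩]
      refine Finset.sum_congr rfl fun x _ => ih _ _ ?_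
      have : ({β | Function.update s α (p.succAbove x) β = p} : Finset (Fin r))
          = ({β | s β = p} : Finset (Fin r)).erase α := by
        ext β
        by_cases hβ : β = α
        · subst hβ; simp [Fin.succAbove_ne]
        · simp [hβ]
      rw [this, Finset.card_erase_of_mem hα, hs, Nat.add_sub_cancel]
    · rw [hA.apply_eq_zero α (by tauto), hB.apply_eq_zero α (by tauto)]

end Injectivity

/-! ### Slice sums over boxes -/

section Surjectivity

variable {k : Type*} [CommRing k] {m r : ℕ}

/-- Summation over a box whose side at the place `α` is everything: first over the coordinate
at `α`, then over the box where this coordinate is frozen to `x₀`. -/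
lemma sum_piFinset_update_univ (P : Fin r → Finset (Fin m)) (α : Fin r) (x₀ : Fin m)
    (f : (Fin r → Fin m) → k) :
    ∑ u ∈ Fintype.piFinset (Function.update P α univ), f u =
      ∑ u ∈ Fintype.piFinset (Function.update P α {x₀}), ∑ x, f (Function.update u α x) := by
  rw [← Finset.sum_product']
  refine Finset.sum_bij' (fun u _ => (Function.update u α x₀, u α))
    (fun v _ => Function.update v.1 α v.2) ?_ ?_ ?_ ?_ ?_
  · intro u hu
    simp only [Fintype.mem_piFinset, mem_product, mem_univ, and_true] at hu ⊢
    intro β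
    have := hu β
    by_cases hβ : β = α
    · subst hβ; simp
    · simpa [hβ] using this
  · rintro ⟨u, x⟩ hu
    simp only [Fintype.mem_piFinset, mem_product, mem_univ, and_true] at hu ⊢
    intro β
    have := hu β
    by_cases hβ : β = α
    · subst hβ; simp
    · simpa [hβ] using this
  · intro u _
    simp
  · rintro ⟨u, x⟩ hu
    simp only [Fintype.mem_piFinset, mem_product, mem_univ, and_true] at hu
    have : u α = x₀ := by simpa using hu α
    simp [← this]
  · intro u _
    simp

lemma sum_piFinset_col (P : Fin r → Finset (Fin m)) (α : Fin r) (f : (Fin r → Fin m) → k) :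
    ∑ x, ∑ u ∈ Fintype.piFinset (Function.update P α {x}), f u =
      ∑ u ∈ Fintype.piFinset (Function.update P α univ), f u := by
  rw [← Finset.sum_fiberwise_of_maps_to (t := univ) (g := fun u : Fin r → Fin m => u α)
    (fun _ _ => mem_univ _)]
  refine Finset.sum_congr rfl fun x _ => Finset.sum_congr ?_ fun _ _ => rfl
  ext u
  simp only [Fintype.mem_piFinset, mem_filter]
  constructor
  · intro h
    refine ⟨fun β => ?_, by simpa using h α⟩
    have := h β
    by_cases hβ : β = α
    · subst hβ; simp
    · simpa [hβ] using this
  · rintro ⟨h, hx⟩ β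
    have := h β
    by_cases hβ : β = α
    · subst hβ; simpa using hx
    · simpa [hβ] using this

/-- Condition (G), summed over a box: the left side is a sum of column slices, the right side
a sum of row slices. In particular the left side does not depend on `y`. -/
lemma sum_piFinset_row {C : Matrix (Fin r → Fin m) (Fin r → Fin m) k} (hC : CondG k m r C)
    (P : Fin r → Finset (Fin m)) (α : Fin r) (w : Fin r → Fin m) (x₀ y : Fin m) :
    ∑ u ∈ Fintype.piFinset (Function.update P α univ), C u (Function.update w α y) =
      ∑ y', ∑ u ∈ Fintype.piFinset (Function.update P α {x₀}), C u (Function.update w α y') := by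
  rw [sum_piFinset_update_univ P α x₀, Finset.sum_comm (s := univ)]
  refine Finset.sum_congr rfl fun u hu => ?_
  obtain ⟨b, hb, hb'⟩ := hC α u w
  have hu' : u α = x₀ := by simpa using Fintype.mem_piFinset.1 hu α
  rw [hb y, ← hb' x₀, ← hu', Function.update_eq_self]

/-! ### The inverse of excision -/

/-- The values in `{1,…,m}` that may replace the value `v`: all of them if `v = p`, and only
the one corresponding to `v` otherwise. -/
def fillings (p v : Fin (m + 1)) : Finset (Fin m) := {x | v = p ∨ p.succAbove x = v}

lemma fillings_self (p : Fin (m + 1)) : fillings p p = univ := by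
  simp [fillings]

lemma fillings_succAbove (p : Fin (m + 1)) (x : Fin m) : fillings p (p.succAbove x) = {x} := by
  ext y
  simp [fillings, Fin.succAbove_ne]

open Classical in
/-- For `C` in `E_k(m,r)`, the special invariant with excision `C`. On matched indices, the places of `s` with value `p`
are filled in all possible ways and those of `t` with value `q` in one fixed way (the default value
of `Function.invFun`), and the corresponding entries of `C` are summed. -/
noncomputable def unexcise [Nonempty (Fin m)] (p q : Fin (m + 1))
    (C : Matrix (Fin r → Fin m) (Fin r → Fin m) k) :
    Matrix (Fin r → Fin (m + 1)) (Fin r → Fin (m + 1)) k :=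
  Matrix.of fun s t =>
    if ∀ β, s β = p ↔ t β = q then
      ∑ u ∈ Fintype.piFinset (fun β => fillings p (s β)), C u (fun β => Function.invFun q.succAbove (t β))
    else 0

variable [Nonempty (Fin m)] {p q : Fin (m + 1)} {C : Matrix (Fin r → Fin m) (Fin r → Fin m) k}

lemma invFun_succAbove (q : Fin (m + 1)) (y : Fin m) :
    Function.invFun q.succAbove (q.succAbove y) = y :=
  Function.leftInverse_invFun Fin.succAbove_right_injective y

lemma unexcise_of_matched {s t : Fin r → Fin (m + 1)} (h : ∀ β, s β = p ↔ t β = q) :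
    unexcise p q C s t = ∑ u ∈ Fintype.piFinset (fun β => fillings p (s β)),
      C u (fun β => Function.invFun q.succAbove (t β)) :=
  if_pos h

lemma unexcise_of_not {s t : Fin r → Fin (m + 1)} (β : Fin r) (h : ¬ (s β = p ↔ t β = q)) :
    unexcise p q C s t = 0 :=
  if_neg fun h' => h (h' β)

lemma unexcise_update {i j : Fin r → Fin (m + 1)} {α : Fin r}
    (h : ∀ β, β ≠ α → (i β = p ↔ j β = q)) {x y : Fin (m + 1)} (hxy : x = p ↔ y = q) :
    unexcise p q C (Function.update i α x) (Function.update j α y) =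
      ∑ u ∈ Fintype.piFinset (Function.update (fun β => fillings p (i β)) α (fillings p x)),
        C u (Function.update (fun β => Function.invFun q.succAbove (j β)) α
          (Function.invFun q.succAbove y)) := by
  rw [unexcise_of_matched]
  · have h1 : (fun β => fillings p (Function.update i α x β)) =
        Function.update (fun β => fillings p (i β)) α (fillings p x) :=
      Function.comp_update (fillings p) i α x
    have h2 : (fun β => Function.invFun q.succAbove (Function.update j α y β)) =
        Function.update (fun β => Function.invFun q.succAbove (j β)) α
          (Function.invFun q.succAbove y) :=
      Function.comp_update (Function.invFun q.succAbove) j α y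
    rw [h1, h2]
  · intro β
    by_cases hβ : β = α
    · subst hβ; simpa using hxy
    · simpa [hβ] using h β hβ

lemma condG_unexcise (hC : CondG k m r C) : CondG k (m + 1) r (unexcise p q C) := by
  intro α i j
  by_cases h : ∀ β, β ≠ α → (i β = p ↔ j β = q)
  · -- The common slice sum is the entry with `p` and `q` at the place `α`.
    refine ⟨unexcise p q C (Function.update i α p) (Function.update j α q), fun y => ?_, fun x => ?_⟩
    · rw [Fin.sum_univ_succAbove _ p]
      rcases Fin.eq_self_or_eq_succAbove q y with rfl | ⟨y, rfl⟩
      · rw [Finset.sum_eq_zero, add_zero]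
        intro x _
        exact unexcise_of_not α (by simp [Fin.succAbove_ne])
      · rw [unexcise_of_not α (by simp [Fin.succAbove_ne]), zero_add]
        simp_rw [fun x => unexcise_update (C := C) h (x := p.succAbove x) (y := q.succAbove y)
          (by simp [Fin.succAbove_ne])]
        rw [unexcise_update h (by simp)]
        simp only [fillings_succAbove, fillings_self]
        rw [sum_piFinset_col, sum_piFinset_row hC _ _ _ (Classical.arbitrary _),
          sum_piFinset_row hC _ _ _ (Classical.arbitrary _)]
    · rw [Fin.sum_univ_succAbove _ q]
      rcases Fin.eq_self_or_eq_succAbove p x with rfl | ⟨x, rfl⟩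
      · rw [Finset.sum_eq_zero, add_zero]
        intro y _
        exact unexcise_of_not α (by simp [Fin.succAbove_ne])
      · rw [unexcise_of_not α (by simp [Fin.succAbove_ne]), zero_add]
        simp_rw [fun y => unexcise_update (C := C) h (x := p.succAbove x) (y := q.succAbove y)
          (by simp [Fin.succAbove_ne])]
        rw [unexcise_update h (by simp)]
        simp only [fillings_succAbove, fillings_self, invFun_succAbove]
        rw [sum_piFinset_row hC _ _ _ x]
  · push Not at h
    obtain ⟨β, hβ, hne⟩ := h
    have h0 : ∀ x y, unexcise p q C (Function.update i α x) (Function.update j α y) = 0 := by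
      intro x y
      refine unexcise_of_not β ?_
      simp only [Function.update_of_ne hβ]
      tauto
    exact ⟨0, fun y => by simp [h0], fun x => by simp [h0]⟩

lemma condH_unexcise (hC : CondH k m r C) : CondH k (m + 1) r (unexcise p q C) := by
  intro i j hij
  by_cases h : ∀ β, i β = p ↔ j β = q
  · rw [unexcise_of_matched h]
    refine Finset.sum_eq_zero fun u hu => hC _ _ fun hvt => hij ?_
    have hu' : ∀ β, i β = p ∨ p.succAbove (u β) = i β := by
      simpa [fillings] using hu
    have hinv : ∀ β, j β ≠ q → q.succAbove (Function.invFun q.succAbove (j β)) = j β :=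
      fun β hβ => Function.invFun_eq (Fin.exists_succAbove_eq hβ)
    funext a b
    have hab : (u a = u b) = (Function.invFun q.succAbove (j a) =
      Function.invFun q.succAbove (j b)) := congrFun (congrFun hvt a) b
    apply propext
    change i a = i b ↔ j a = j b
    -- Only two places outside the common block of `p` and `q` need the value-type of `C`.
    by_cases ha : i a = p
    · rw [ha, (h a).1 ha, eq_comm, h b, eq_comm]
    by_cases hb : i b = p
    · rw [hb, (h b).1 hb, h a]
    rw [← (hu' a).resolve_left ha, ← (hu' b).resolve_left hb, Fin.succAbove_right_inj, hab,
      ← hinv a (fun e => ha ((h a).2 e)), ← hinv b (fun e => hb ((h b).2 e)),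
      Fin.succAbove_right_inj, invFun_succAbove, invFun_succAbove]
  · push Not at h
    obtain ⟨β, hβ⟩ := h
    exact unexcise_of_not β (by tauto)

lemma condS_unexcise (hC : CondS k m r C) : CondS k (m + 1) r (unexcise p q C) := by
  intro σ i j
  by_cases h : ∀ β, i β = p ↔ j β = q
  · rw [unexcise_of_matched h, unexcise_of_matched (s := i ∘ σ) (t := j ∘ σ) (fun β => h (σ β))]
    symm
    refine Finset.sum_equiv (σ.symm.arrowCongr (Equiv.refl _)) (fun u => ?_) (fun u _ => ?_)
    · simp only [Fintype.mem_piFinset]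
      exact (σ.forall_congr_right (q := fun β => u β ∈ fillings p (i β))).symm
    · exact (hC σ u _).symm
  · push Not at h
    obtain ⟨β, hβ⟩ := h
    rw [unexcise_of_not (s := i) β (by tauto), unexcise_of_not (σ.symm β)]
    simp only [Function.comp_apply, Equiv.apply_symm_apply]
    tauto

lemma memESpec_unexcise (hC : MemE k m r C) : MemESpec k (m + 1) r p q (unexcise p q C) := by
  refine ⟨⟨condG_unexcise hC.1, condH_unexcise hC.2.1, condS_unexcise hC.2.2⟩, fun s t hst α => ?_⟩
  by_contra h
  exact hst (unexcise_of_not α h)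

lemma excise_unexcise : excise k m r p q (unexcise p q C) = C := by
  ext s t
  change unexcise p q C (fun β => p.succAbove (s β)) (fun β => q.succAbove (t β)) = C s t
  rw [unexcise_of_matched (by simp [Fin.succAbove_ne])]
  simp only [fillings_succAbove, invFun_succAbove, Fintype.piFinset_singleton, sum_singleton]

end Surjectivity

/-- For `n ≥ 2` (represented as `m+1`, `m ≥ 1`) and any `1 ≤ p,q ≤ n`, excision is a
k-linear isomorphism from `E_k(n,r)^p_q` onto `E_k(n-1,r)`: it is k-linear, maps
`E_k(n,r)^p_q` into `E_k(n-1,r)`, is injective on `E_k(n,r)^p_q`, and every element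
of `E_k(n-1,r)` is the image of some element of `E_k(n,r)^p_q`. -/
theorem stmt_9 {k : Type*} [CommRing k] {m r : ℕ} (hm : 1 ≤ m) (hr : 0 < r)
    (p q : Fin (m+1)) :
    (∀ A B : Matrix (Fin r → Fin (m+1)) (Fin r → Fin (m+1)) k,
        excise k m r p q (A + B) = excise k m r p q A + excise k m r p q B) ∧
    (∀ (c : k) (A : Matrix (Fin r → Fin (m+1)) (Fin r → Fin (m+1)) k),
        excise k m r p q (c • A) = c • excise k m r p q A) ∧
    (∀ A, MemESpec k (m+1) r p q A → MemE k m r (excise k m r p q A)) ∧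
    (∀ A B, MemESpec k (m+1) r p q A → MemESpec k (m+1) r p q B →
        excise k m r p q A = excise k m r p q B → A = B) ∧
    (∀ C : Matrix (Fin r → Fin m) (Fin r → Fin m) k, MemE k m r C →
        ∃ A, MemESpec k (m+1) r p q A ∧ excise k m r p q A = C) := by
  have : Nonempty (Fin m) := ⟨⟨0, hm⟩⟩
  exact ⟨fun _ _ => rfl, fun _ _ => rfl, fun _ hA => hA.memE_excise,
    fun _ _ hA hB h => hA.ext_of_excise hm hB h,
    fun C hC => ⟨unexcise p q C, memESpec_unexcise hC, excise_unexcise⟩⟩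
end

section
/- (Schur–Weyl duality for the half partition algebra.) Let k be a commutative ring, n ≥ 2, r ≥ 1. Then the k-module E_k(n,r)^n_n of special invariants, which is isomorphic to the centralizer algebra End_{P_{r+1/2}(n)}((k^n)^{⊗r}) of the half partition algebra, equals the k-linear span of the matrices P(w)^{⊗r} for those w ∈ S_n with w(n) = n. -/
/-!
An entry `a^i_j` of a matrix in `E_k(n,r)` depends only on the set of cells `{(i_α, j_α)}`: by (S) the
order of the places is irrelevant, and by (G) and (H) a repeated cell may be replaced by any other
occurring cell (`entry_eq_of_image_eq`). So the matrix is a function `F` on finite sets of cells,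
which by (H) is zero off partial injections and by (G) satisfies
`F g = ∑ x, F (g ∪ {(x, y)}) = ∑ y, F (g ∪ {(x, y)})` whenever `g` has fewer than `m = min r n` cells.
The matrix `P(w)^{⊗r}` corresponds to the indicator `permInd` of the subsets of the graph of `w`, and
the claim is that `F` is a linear combination of these, with `w` fixing the last point.

Every partial injection with `m` cells is the graph of a permutation `w` off a set `I` of `n - m`
columns on which `w` is increasing, and `w` is then its lexicographically least completion
(`exists_perm_of_isPartialInj`). The permutations are treated in decreasing lexicographic order. Let
`w` be the greatest one for which `F` is nonzero at some restriction `w|Iᶜ` of this kind. The key point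
is that `F (w|Iᶜ)` does not depend on `I` (`eq_of_strictMonoOn`), so that subtracting this value times
`permInd w` makes `F` vanish at `w`, and leaves it zero at all greater permutations.

Independence of `I` comes from an exchange identity. For a set `g` of cells, rows `R` and columns `K`,
the sum `∑ (-1)^|h| F (g ∪ h)` over `h ⊆ R × K` equals both the sum of `F` over all ways of placing
the rows of `R` in columns outside `K` and the sum over all ways of placing the columns of `K` in rows
outside `R`. With `g = w|(I ∪ I')ᶜ`, `K = I \ I'` and `R = w (I' \ I)`, and when `w` has no inversion
with a column of `I' \ I` to the left of a column of `I \ I'`, lexicographic minimality leaves only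
the terms `F (w|Iᶜ)` and `F (w|I'ᶜ)` (`eq_of_good`). In general `I` and `I'` are both compared with a
set of left-to-right maxima, or of right-to-left minima, of `w` on `I ∪ I'`.

If `F` comes from a special invariant, then it vanishes automatically at each `w` which moves the last
point (`IsSpecial.vanishes`), so only the permutations fixing that point are used. Conversely the
matrices `P(w)^{⊗r}` of these permutations are special invariants, and these form a submodule.
-/

open Finset

set_option linter.unusedSectionVars false

/-! ### Consistent functions on sets of cells, and the exchange identity -/

/-- A set of cells (row, column) is the graph of a partial injection when two of its cells share a
row exactly when they share a column. -/
def IsPartialInj {X Y : Type*} (h : Finset (X × Y)) : Prop :=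
  ∀ p ∈ h, ∀ q ∈ h, p.1 = q.1 ↔ p.2 = q.2

/-- A function on finite sets of cells is `m`-consistent when it is supported on partial injections
and, on sets of fewer than `m` cells, is recovered by summing over all ways of adding a cell in a
fixed column, or in a fixed row. These are the formal properties of
`F h = ∑ c w`, summed over the permutations `w` whose graph contains `h`. -/
structure IsConsistent {X Y k : Type*} [Fintype X] [Fintype Y] [DecidableEq X] [DecidableEq Y]
    [CommRing k] (m : ℕ) (F : Finset (X × Y) → k) : Prop where
  inj : ∀ h, F h ≠ 0 → IsPartialInj h
  col : ∀ g : Finset (X × Y), g.card < m → ∀ y, F g = ∑ x, F (insert (x, y) g)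
  row : ∀ g : Finset (X × Y), g.card < m → ∀ x, F g = ∑ y, F (insert (x, y) g)

section AltSum

variable {X Y k : Type*} [Fintype X] [Fintype Y] [DecidableEq X] [DecidableEq Y] [CommRing k]

/-- The inclusion–exclusion sum of `F` over the sets `g ∪ h`, `h ⊆ T`: for an `F` which comes from
weights on permutations and `T` disjoint from `g`, the total weight of the permutations
whose graph contains `g` and avoids `T`. -/
def altSum (F : Finset (X × Y) → k) (g T : Finset (X × Y)) : k :=
  ∑ h ∈ T.powerset, (-1) ^ h.card * F (g ∪ h)

theorem altSum_insert (F : Finset (X × Y) → k) (g : Finset (X × Y)) {T : Finset (X × Y)}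
    {p : X × Y} (hp : p ∉ T) :
    altSum F g (insert p T) = altSum F g T - altSum F (insert p g) T := by
  unfold altSum
  rw [sum_powerset_insert hp, sub_eq_add_neg, ← sum_neg_distrib]
  congr 1
  refine sum_congr rfl fun h hh => ?_
  have : p ∉ h := fun h' => hp (mem_powerset.1 hh h')
  rw [card_insert_of_notMem this, union_insert, insert_union, pow_succ]
  ring

theorem altSum_eq_zero {F : Finset (X × Y) → k} (hF : ∀ h, F h ≠ 0 → IsPartialInj h)
    {g : Finset (X × Y)} (hg : ¬ IsPartialInj g) (T : Finset (X × Y)) : altSum F g T = 0 := by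
  refine sum_eq_zero fun h _ => ?_
  rw [mul_eq_zero_of_right]
  by_contra h0
  exact hg fun p hp q hq => hF _ h0 p (mem_union_left _ hp) q (mem_union_left _ hq)

/-- Removing from the forbidden set the cells `(x, y)`, `y ∈ K`, of one row `x`: since two cells of
one row never occur together, inclusion–exclusion on such cells is linear. -/
theorem altSum_row_block {F : Finset (X × Y) → k} (hF : ∀ h, F h ≠ 0 → IsPartialInj h)
    (x : X) (T : Finset (X × Y)) (hT : ∀ y, (x, y) ∉ T) (K : Finset Y) :
    ∀ g, altSum F g (T ∪ K.image (fun y => (x, y))) =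
      altSum F g T - ∑ y ∈ K, altSum F (insert (x, y) g) T := by
  induction K using Finset.induction_on with
  | empty => intro g; simp
  | insert y K hy ih =>
    intro g
    have hnot : (x, y) ∉ T ∪ K.image (fun y => (x, y)) := by simp [hT, hy]
    rw [image_insert, union_insert, altSum_insert F g hnot, ih, ih, sum_insert hy]
    have : ∑ y' ∈ K, altSum F (insert (x, y') (insert (x, y) g)) T = 0 := by
      refine sum_eq_zero fun y' hy' => altSum_eq_zero hF (fun h => hy ?_) T
      have := (h (x, y') (by simp) (x, y) (by simp)).1 rfl
      simp only at this
      exact this ▸ hy'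
    rw [this]; ring

theorem card_le_of_isPartialInj {h : Finset (X × Y)} (hh : IsPartialInj h) {R : Finset X}
    {K : Finset Y} (hs : h ⊆ R ×ˢ K) : h.card ≤ R.card := by
  refine card_le_card_of_injOn Prod.fst (fun p hp => (mem_product.1 (hs hp)).1) ?_
  intro p hp q hq hpq
  exact Prod.ext hpq ((hh p hp q hq).1 hpq)

/-- Expansion along a row `x`: avoiding the columns of `K` in row `x` means using a column outside
`K`. -/
theorem altSum_row {m : ℕ} {F : Finset (X × Y) → k} (hF : IsConsistent m F) {x : X}
    {R : Finset X} (hx : x ∉ R) (K : Finset Y) {g : Finset (X × Y)}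
    (hg : g.card + (insert x R).card ≤ m) :
    altSum F g (insert x R ×ˢ K) = ∑ y ∈ Kᶜ, altSum F (insert (x, y) g) (R ×ˢ K) := by
  have e1 : insert x R ×ˢ K = R ×ˢ K ∪ K.image (fun y => (x, y)) := by
    ext ⟨a, b⟩; simp; tauto
  have e2 : altSum F g (R ×ˢ K) = ∑ y, altSum F (insert (x, y) g) (R ×ˢ K) := by
    unfold altSum
    rw [sum_comm]
    refine sum_congr rfl fun h hh => ?_
    rw [← mul_sum]
    congr 1
    by_cases hinj : IsPartialInj h
    · have h1 := card_le_of_isPartialInj hinj (mem_powerset.1 hh)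
      have h2 := card_union_le g h
      rw [card_insert_of_notMem hx] at hg
      simp only [insert_union]
      exact hF.row _ (by omega) x
    · have h0 : ∀ g', F (g' ∪ h) = 0 := fun g' => by
        by_contra hne
        exact hinj fun p hp q hq =>
          hF.inj _ hne p (mem_union_right _ hp) q (mem_union_right _ hq)
      simp only [h0, sum_const_zero]
  rw [e1, altSum_row_block hF.inj x _ (by simp [hx]) K g, e2, ← sum_add_sum_compl K]
  ring

/-- Expanding a block `R ×ˢ K` row by row writes the alternating sum as the sum of
`F (g ∪ {(x, φ x) : x ∈ R})` over all `φ : R → Kᶜ`. This is the case in which the only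
possibly nonzero term is the one for `φ = b`. -/
theorem altSum_eq_of_unique {m : ℕ} {F : Finset (X × Y) → k} (hF : IsConsistent m F)
    (K : Finset Y) (b : X → Y) (R : Finset X) :
    ∀ g : Finset (X × Y), g.card + R.card ≤ m → (∀ x ∈ R, b x ∉ K) →
      (∀ φ : X → Y, (∀ x ∈ R, φ x ∉ K) → (∃ x ∈ R, φ x ≠ b x) →
        F (g ∪ R.image (fun x => (x, φ x))) = 0) →
      altSum F g (R ×ˢ K) = F (g ∪ R.image (fun x => (x, b x))) := by
  induction R using Finset.induction_on with
  | empty => intro g _ _ _; simp [altSum]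
  | insert x R hx ih =>
    intro g hg hb hφ
    have key : ∀ y, ∀ φ : X → Y,
        insert (x, y) g ∪ R.image (fun x => (x, φ x)) =
          g ∪ (insert x R).image (fun x' => (x', Function.update φ x y x')) := by
      intro y φ
      rw [image_insert, union_insert, insert_union, Function.update_self]
      congr 2
      refine image_congr fun x' hx' => ?_
      have : x' ≠ x := fun h => hx (h ▸ hx')
      simp [this]
    have hstep : ∀ y ∉ K, altSum F (insert (x, y) g) (R ×ˢ K) =
        F (insert (x, y) g ∪ R.image (fun x => (x, b x))) := by
      intro y hy
      refine ih _ ?_ (fun x' hx' => hb x' (mem_insert_of_mem hx')) ?_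
      · have := card_insert_le (x, y) g
        rw [card_insert_of_notMem hx] at hg
        omega
      · rintro φ h1 ⟨x', hx', hne⟩
        have hxx : x' ≠ x := fun h => hx (h ▸ hx')
        rw [key]
        refine hφ _ ?_ ⟨x', mem_insert_of_mem hx', by simpa [hxx] using hne⟩
        intro z hz
        by_cases hzx : z = x
        · subst hzx; simpa using hy
        · simpa [hzx] using h1 z ((mem_insert.1 hz).resolve_left hzx)
    rw [altSum_row hF hx K hg, sum_eq_single (b x)]
    · rw [hstep _ (hb x (mem_insert_self _ _)), key, Function.update_eq_self]
    · intro y hy hne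
      rw [mem_compl] at hy
      rw [hstep y hy, key]
      refine hφ _ ?_ ⟨x, mem_insert_self _ _, by simpa using hne⟩
      intro z hz
      by_cases hzx : z = x
      · subst hzx; simpa using hy
      · simpa [hzx] using hb z hz
    · intro h
      exact absurd (mem_compl.2 (hb x (mem_insert_self _ _))) h

theorem IsPartialInj.swap {h : Finset (X × Y)} (hh : IsPartialInj (h.image Prod.swap)) :
    IsPartialInj h := fun p hp q hq =>
  (hh p.swap (mem_image_of_mem _ hp) q.swap (mem_image_of_mem _ hq)).symm

theorem IsConsistent.swap {m : ℕ} {F : Finset (X × Y) → k} (hF : IsConsistent m F) :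
    IsConsistent m (fun h : Finset (Y × X) => F (h.image Prod.swap)) where
  inj h hh := (hF.inj _ hh).swap
  col g hg y := by
    simp only [image_insert, Prod.swap_prod_mk]
    exact hF.row _ (lt_of_le_of_lt card_image_le hg) y
  row g hg y := by
    simp only [image_insert, Prod.swap_prod_mk]
    exact hF.col _ (lt_of_le_of_lt card_image_le hg) y

theorem altSum_swap (F : Finset (X × Y) → k) (T : Finset (Y × X)) :
    ∀ g, altSum (fun h : Finset (Y × X) => F (h.image Prod.swap)) g T =
      altSum F (g.image Prod.swap) (T.image Prod.swap) := by
  induction T using Finset.induction_on with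
  | empty => intro g; simp [altSum]
  | insert p T hp ih =>
    intro g
    have : p.swap ∉ T.image Prod.swap := by
      simpa [mem_image] using hp
    rw [altSum_insert _ _ hp, image_insert, altSum_insert _ _ this, ih, ih, image_insert]

/-- The exchange identity. Expanding the alternating sum of the block `R ×ˢ K` by its rows and by its
columns gives two expressions for it; here each of them has at most one nonzero term. -/
theorem sum_exchange {m : ℕ} {F : Finset (X × Y) → k} (hF : IsConsistent m F)
    {K : Finset Y} {R : Finset X} {b : X → Y} {a : Y → X} {g : Finset (X × Y)}
    (hR : g.card + R.card ≤ m) (hK : g.card + K.card ≤ m)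
    (hb : ∀ x ∈ R, b x ∉ K) (ha : ∀ y ∈ K, a y ∉ R)
    (h1 : ∀ φ : X → Y, (∀ x ∈ R, φ x ∉ K) → (∃ x ∈ R, φ x ≠ b x) →
        F (g ∪ R.image (fun x => (x, φ x))) = 0)
    (h2 : ∀ ψ : Y → X, (∀ y ∈ K, ψ y ∉ R) → (∃ y ∈ K, ψ y ≠ a y) →
        F (g ∪ K.image (fun y => (ψ y, y))) = 0) :
    F (g ∪ R.image (fun x => (x, b x))) = F (g ∪ K.image (fun y => (a y, y))) := by
  rw [← altSum_eq_of_unique hF K b R g hR hb h1]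
  have conv : ∀ ψ : Y → X, ((g.image Prod.swap) ∪ K.image (fun y => (y, ψ y))).image Prod.swap
      = g ∪ K.image (fun y => (ψ y, y)) := by
    intro ψ
    rw [image_union, image_image, image_image]
    simp [Function.comp_def]
  have := altSum_eq_of_unique hF.swap R a K (g.image Prod.swap)
    ((Nat.add_le_add_right card_image_le _).trans hK) ha
    (fun ψ e1 e2 => by simp only [conv]; exact h2 ψ e1 e2)
  simp only [conv] at this
  rw [← this, altSum_swap, image_swap_product, image_image]
  simp

end AltSum

/-! ### Completions of partial injections, and independence of the chosen completion -/


/-- The cells of the permutation `w` (rows as values) in the columns of `S`. -/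
def permGraph {n : ℕ} (w : Equiv.Perm (Fin n)) (S : Finset (Fin n)) : Finset (Fin n × Fin n) :=
  S.image fun c => (w c, c)

/-- Every partial injection `h` is the restriction of a permutation `w` that is increasing on the set
`I` of columns free of `h`. Among the permutations extending `h` this `w` is lexicographically
least. -/
theorem exists_perm_of_isPartialInj {n : ℕ} {h : Finset (Fin n × Fin n)} (hh : IsPartialInj h) :
    ∃ (w : Equiv.Perm (Fin n)) (I : Finset (Fin n)), I.card = n - h.card ∧
      StrictMonoOn w I ∧ h = permGraph w Iᶜ := by
  have c1 : (h.image Prod.fst).card = h.card := card_image_of_injOn fun p hp q hq e =>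
    Prod.ext e ((hh p hp q hq).1 e)
  have c2 : (h.image Prod.snd).card = h.card := card_image_of_injOn fun p hp q hq e =>
    Prod.ext ((hh p hp q hq).2 e) e
  set I := (h.image Prod.snd)ᶜ with hI
  set I2 := (h.image Prod.fst)ᶜ with hI2
  have d1 : I.card = n - h.card := by rw [hI, card_compl, c2, Fintype.card_fin]
  have d2 : I2.card = n - h.card := by rw [hI2, card_compl, c1, Fintype.card_fin]
  let e : I ≃o I2 := (I.orderIsoOfFin d1).symm.trans (I2.orderIsoOfFin d2)
  have hex : ∀ c, c ∉ I → ∃ x, (x, c) ∈ h := by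
    intro c hc
    rw [hI, mem_compl, not_not, mem_image] at hc
    obtain ⟨⟨x, y⟩, hp, rfl⟩ := hc
    exact ⟨x, hp⟩
  choose! v hv using hex
  let u : Fin n → Fin n := fun c => if hc : c ∈ I then e ⟨c, hc⟩ else v c
  have u1 : ∀ c (hc : c ∈ I), u c = e ⟨c, hc⟩ := fun c hc => dif_pos hc
  have u2 : ∀ c (hc : c ∉ I), u c = v c := fun c hc => dif_neg hc
  have u3 : ∀ c, u c ∈ I2 ↔ c ∈ I := by
    intro c
    by_cases hc : c ∈ I
    · rw [u1 c hc]; simp [hc]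
    · rw [u2 c hc]
      simp only [hc, iff_false, hI2, mem_compl, not_not]
      exact mem_image.2 ⟨_, hv c hc, rfl⟩
  have uinj : Function.Injective u := by
    intro c d hcd
    by_cases hc : c ∈ I
    · have hd : d ∈ I := by rw [← u3, ← hcd, u3]; exact hc
      rw [u1 c hc, u1 d hd] at hcd
      simpa using e.injective (Subtype.ext hcd)
    · have hd : d ∉ I := by rw [← u3, ← hcd, u3]; exact hc
      rw [u2 c hc, u2 d hd] at hcd
      exact (hh _ (hv c hc) _ (hv d hd)).1 hcd
  refine ⟨Equiv.ofBijective u (Finite.injective_iff_bijective.1 uinj), I, d1, ?_, ?_⟩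
  · intro c hc d hd hcd
    simp only [Equiv.ofBijective_apply]
    rw [u1 c hc, u1 d hd]
    exact e.strictMono (show (⟨c, hc⟩ : I) < ⟨d, hd⟩ from hcd)
  · ext ⟨x, y⟩
    simp only [permGraph, mem_image, mem_compl, Equiv.ofBijective_apply, Prod.mk.injEq]
    constructor
    · intro hp
      have hy : y ∉ I := by rw [hI, mem_compl, not_not]; exact mem_image.2 ⟨_, hp, rfl⟩
      exact ⟨y, hy, by rw [u2 y hy]; exact (hh _ (hv y hy) _ hp).2 rfl, rfl⟩
    · rintro ⟨c, hc, rfl, rfl⟩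
      rw [u2 c hc]; exact hv c hc

/-- `F` vanishes on all sets of `m` cells whose increasing completion is `w`. -/
def Vanishes {n : ℕ} {k : Type*} [CommRing k] (m : ℕ) (F : Finset (Fin n × Fin n) → k)
    (w : Equiv.Perm (Fin n)) : Prop :=
  ∀ I : Finset (Fin n), I.card = n - m → StrictMonoOn w I → F (permGraph w Iᶜ) = 0

/-- If `w` is increasing on `I` and on `I'` and has no inversion with a column of `I' \ I` to the
left of a column of `I \ I'`, then `w` is lexicographically least among the permutations `w1` which
agree with it off `I ∪ I'` and take no column of `I \ I'` to a row in `w (I' \ I)`. -/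
theorem not_lex_lt {n : ℕ} {w w1 : Equiv.Perm (Fin n)} {I I' : Finset (Fin n)}
    (hI : StrictMonoOn w I) (hI' : StrictMonoOn w I')
    (hgood : ∀ a ∈ I \ I', ∀ b ∈ I' \ I, b < a → ¬ w a < w b)
    (hag : ∀ c, c ∉ I ∪ I' → w1 c = w c)
    (hav : ∀ c ∈ I \ I', w1 c ∉ (I' \ I).image w) :
    ¬ toLex (w1 : Fin n → Fin n) < toLex (w : Fin n → Fin n) := by
  rintro ⟨c, hlt, hc⟩
  simp only [Pi.toLex_apply] at hlt hc
  -- At the first disagreement `c`, the value `w1 c` is `w c'` for a later column `c'`, so that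
  -- `c < c'` is an inversion of `w` inside `I ∪ I'`.
  obtain ⟨c', hc'⟩ := w.surjective (w1 c)
  rw [← hc'] at hc
  have hne : c' ≠ c := fun h => by rw [h] at hc; exact lt_irrefl _ hc
  have hcc : c < c' := by
    rcases lt_trichotomy c' c with h | h | h
    · exact absurd (w1.injective ((hlt c' h).trans hc')) hne
    · exact absurd h hne
    · exact h
  have m1 : c ∈ I ∪ I' := by
    by_contra h
    rw [hc', hag c h] at hc
    exact lt_irrefl _ hc
  have m2 : c' ∈ I ∪ I' := by
    by_contra h
    exact hne (w1.injective ((hag c' h).trans hc'))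
  have n1 : ¬ (c ∈ I ∧ c' ∈ I) := fun h => lt_asymm hc (hI h.1 h.2 hcc)
  have n2 : ¬ (c ∈ I' ∧ c' ∈ I') := fun h => lt_asymm hc (hI' h.1 h.2 hcc)
  rw [mem_union] at m1 m2
  by_cases h : c ∈ I
  · refine hav c (by rw [mem_sdiff]; tauto) ?_
    rw [← hc']
    exact mem_image_of_mem _ (by rw [mem_sdiff]; tauto)
  · exact hgood c' (by rw [mem_sdiff]; tauto) c (by rw [mem_sdiff]; tauto) hcc hc

/-- If `F` vanishes at all permutations beyond `w`, its values at two restrictions of `w` whose free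
sets satisfy the inversion condition of `not_lex_lt` agree. This is the exchange identity for the
columns `K = I \ I'` and the rows `R = w (I' \ I)`. -/
theorem eq_of_good {n m : ℕ} {k : Type*} [CommRing k] {F : Finset (Fin n × Fin n) → k}
    (hF : IsConsistent m F) (hm : m ≤ n) {w : Equiv.Perm (Fin n)}
    (hV : ∀ w1 : Equiv.Perm (Fin n),
      toLex (w : Fin n → Fin n) < toLex (w1 : Fin n → Fin n) → Vanishes m F w1)
    {I I' : Finset (Fin n)} (cI : I.card = n - m) (cI' : I'.card = n - m)
    (hI : StrictMonoOn w I) (hI' : StrictMonoOn w I')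
    (hgood : ∀ a ∈ I \ I', ∀ b ∈ I' \ I, b < a → ¬ w a < w b) :
    F (permGraph w Iᶜ) = F (permGraph w I'ᶜ) := by
  set g := permGraph w (I ∪ I')ᶜ with hg
  have ginj : ∀ S, (permGraph w S).card = S.card := fun S =>
    card_image_of_injective _ fun c d h => (Prod.mk.inj h).2
  have s1 : Iᶜ = (I ∪ I')ᶜ ∪ (I' \ I) := by ext c; simp; tauto
  have s2 : I'ᶜ = (I ∪ I')ᶜ ∪ (I \ I') := by ext c; simp; tauto
  have e1 : permGraph w Iᶜ = g ∪ ((I' \ I).image w).image (fun x => (x, w.symm x)) := by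
    rw [s1, hg, permGraph, permGraph, image_union, image_image]
    simp [Function.comp_def]
  have e2 : permGraph w I'ᶜ = g ∪ (I \ I').image (fun c => (w c, c)) := by
    rw [s2, hg, permGraph, permGraph, image_union]
  have cR : g.card + ((I' \ I).image w).card = m := by
    have : Disjoint (I ∪ I')ᶜ (I' \ I) := by
      rw [disjoint_left]; intro c; simp; tauto
    rw [hg, ginj, card_image_of_injective _ w.injective, ← card_union_of_disjoint this, ← s1,
      card_compl, cI, Fintype.card_fin]
    omega
  have cK : g.card + (I \ I').card = m := by
    have : Disjoint (I ∪ I')ᶜ (I \ I') := by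
      rw [disjoint_left]; intro c; simp; tauto
    rw [hg, ginj, ← card_union_of_disjoint this, ← s2, card_compl, cI', Fintype.card_fin]
    omega
  -- The support condition for the exchange: the increasing completion of a set `h` with `F h ≠ 0`
  -- is not beyond `w`, and by minimality it is not before `w` either.
  have forced : ∀ h : Finset (Fin n × Fin n), g ⊆ h → h.card = m → F h ≠ 0 →
      (∀ w1 : Equiv.Perm (Fin n), (∀ p ∈ h, p.1 = w1 p.2) →
        ∀ c ∈ I \ I', w1 c ∉ (I' \ I).image w) → ∀ p ∈ h, p.1 = w p.2 := by
    intro h hgh hc h0 hav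
    obtain ⟨w1, J, cJ, hJ, rfl⟩ := exists_perm_of_isPartialInj (hF.inj h h0)
    have hw1 : ∀ p ∈ permGraph w1 Jᶜ, p.1 = w1 p.2 := by
      intro p hp
      obtain ⟨c, _, rfl⟩ := mem_image.1 hp
      rfl
    have hag : ∀ c, c ∉ I ∪ I' → w1 c = w c := fun c hc =>
      (hw1 (w c, c) (hgh (mem_image.2 ⟨c, mem_compl.2 hc, rfl⟩))).symm
    have hle : ¬ toLex (w : Fin n → Fin n) < toLex (w1 : Fin n → Fin n) := fun hlt =>
      h0 (hV w1 hlt J (by rw [cJ, hc]) hJ)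
    have := le_antisymm (not_lt.1 hle) (not_lt.1 (not_lex_lt hI hI' hgood hag (hav w1 hw1)))
    have : w1 = w := DFunLike.coe_injective (toLex.injective this)
    rw [← this]; exact hw1
  rw [e1, e2]
  refine sum_exchange hF cR.le cK.le ?_ ?_ ?_ ?_
  · intro x hx
    obtain ⟨c, hc, rfl⟩ := mem_image.1 hx
    simp only [Equiv.symm_apply_apply, mem_sdiff] at hc ⊢
    tauto
  · intro y hy hy'
    obtain ⟨c, hc, hcy⟩ := mem_image.1 hy'
    rw [w.injective hcy] at hc
    simp only [mem_sdiff] at hc hy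
    tauto
  · rintro φ hφ ⟨x, hx, hne⟩
    by_contra h0
    refine hne ?_
    rw [Equiv.eq_symm_apply]
    refine (forced _ subset_union_left ?_ h0 ?_ (x, φ x)
      (mem_union_right _ (mem_image_of_mem _ hx))).symm
    · rw [card_union_of_disjoint, card_image_of_injective _ (fun c d h => (Prod.mk.inj h).1), cR]
      rw [disjoint_left]
      intro p hp hp'
      obtain ⟨c, hc, rfl⟩ := mem_image.1 hp
      obtain ⟨x', hx', hp'⟩ := mem_image.1 hp'
      obtain ⟨d, hd, rfl⟩ := mem_image.1 hx'
      rw [w.injective (Prod.mk.inj hp').1] at hd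
      simp only [mem_compl, mem_union, mem_sdiff] at hc hd
      tauto
    · intro w1 hw1 c hc hc'
      have := hw1 (w1 c, φ (w1 c)) (mem_union_right _ (mem_image_of_mem (fun x => (x, φ x)) hc'))
      have e : c = φ (w1 c) := w1.injective this
      exact hφ _ hc' (e ▸ hc)
  · rintro ψ hψ ⟨y, hy, hne⟩
    by_contra h0
    refine hne ?_
    refine forced _ subset_union_left ?_ h0 ?_ (ψ y, y)
      (mem_union_right _ (mem_image.2 ⟨y, hy, rfl⟩))
    · rw [card_union_of_disjoint, card_image_of_injective _ (fun c d h => (Prod.mk.inj h).2), cK]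
      rw [disjoint_left]
      intro p hp hp'
      obtain ⟨c, hc, rfl⟩ := mem_image.1 hp
      obtain ⟨d, hd, hp'⟩ := mem_image.1 hp'
      rw [(Prod.mk.inj hp').2] at hd
      simp only [mem_compl, mem_union, mem_sdiff] at hc hd
      tauto
    · intro w1 hw1 c hc
      rw [← hw1 (ψ c, c) (mem_union_right _ (mem_image.2 ⟨c, hc, rfl⟩))]
      exact hψ c hc

/-- The inversion condition of `eq_of_good` can be dropped. A third free set is compared with both
`I` and `I'`: it is taken inside the left-to-right maxima `U` or inside the right-to-left minima `L`
of `w` on `I ∪ I'`, one of which is large enough because `|U| + |L| ≥ |I| + |I'|`. -/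
theorem eq_of_strictMonoOn {n m : ℕ} {k : Type*} [CommRing k] {F : Finset (Fin n × Fin n) → k}
    (hF : IsConsistent m F) (hm : m ≤ n) {w : Equiv.Perm (Fin n)}
    (hV : ∀ w1 : Equiv.Perm (Fin n),
      toLex (w : Fin n → Fin n) < toLex (w1 : Fin n → Fin n) → Vanishes m F w1)
    {I I' : Finset (Fin n)} (cI : I.card = n - m) (cI' : I'.card = n - m)
    (hI : StrictMonoOn w I) (hI' : StrictMonoOn w I') :
    F (permGraph w Iᶜ) = F (permGraph w I'ᶜ) := by
  classical
  set J := I ∪ I' with hJ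
  set U := J.filter fun p => ∀ q ∈ J, q < p → ¬ w p < w q with hU
  set L := J.filter fun p => ∀ q ∈ J, p < q → ¬ w q < w p with hL
  have monoU : StrictMonoOn w U := by
    intro p hp q hq hpq
    have hp' := (mem_filter.1 hp).1
    have := (mem_filter.1 hq).2 p hp' hpq
    exact lt_of_le_of_ne (not_lt.1 this) fun h => hpq.ne (w.injective h)
  have monoL : StrictMonoOn w L := by
    intro p hp q hq hpq
    have hq' := (mem_filter.1 hq).1
    have := (mem_filter.1 hp).2 q hq' hpq
    exact lt_of_le_of_ne (not_lt.1 this) fun h => hpq.ne (w.injective h)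
  have noinv : ∀ p q, p < q → w q < w p → ¬ (p ∈ I ∧ q ∈ I) ∧ ¬ (p ∈ I' ∧ q ∈ I') :=
    fun p q h1 h2 => ⟨fun h => lt_asymm h2 (hI h.1 h.2 h1), fun h => lt_asymm h2 (hI' h.1 h.2 h1)⟩
  -- A point of `J` outside `U ∪ L` would be the middle of a decreasing triple, and no two points of
  -- the triple could lie in the same one of the increasing sets `I`, `I'`.
  have cov : J ⊆ U ∪ L := by
    intro p hp
    by_contra hnot
    simp only [mem_union, hU, hL, mem_filter, hp, true_and, not_or, not_forall, not_not] at hnot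
    obtain ⟨⟨q, hq, h1, h2⟩, ⟨s, hs, h3, h4⟩⟩ := hnot
    have a1 := noinv q p h1 h2
    have a2 := noinv p s h3 h4
    have a3 := noinv q s (h1.trans h3) (h4.trans h2)
    rcases mem_union.1 hp with hp | hp <;> rcases mem_union.1 hq with hq | hq <;>
      rcases mem_union.1 hs with hs | hs <;>
      first
        | exact a1.1 ⟨hq, hp⟩ | exact a1.2 ⟨hq, hp⟩
        | exact a2.1 ⟨hp, hs⟩ | exact a2.2 ⟨hp, hs⟩
        | exact a3.1 ⟨hq, hs⟩ | exact a3.2 ⟨hq, hs⟩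
  have capU : I ∩ I' ⊆ U ∩ L := by
    intro p hp
    rw [mem_inter] at hp
    have hpJ : p ∈ J := mem_union_left _ hp.1
    rw [mem_inter, hU, hL, mem_filter, mem_filter]
    refine ⟨⟨hpJ, fun q hq h1 h2 => ?_⟩, ⟨hpJ, fun q hq h1 h2 => ?_⟩⟩
    · have := noinv q p h1 h2
      exact (mem_union.1 hq).elim (fun h => this.1 ⟨h, hp.1⟩) fun h => this.2 ⟨h, hp.2⟩
    · have := noinv p q h1 h2
      exact (mem_union.1 hq).elim (fun h => this.1 ⟨hp.1, h⟩) fun h => this.2 ⟨hp.2, h⟩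
  have hcard : n - m ≤ U.card ∨ n - m ≤ L.card := by
    have h1 := card_union_add_card_inter U L
    have h2 := card_union_add_card_inter I I'
    have h3 := card_le_card cov
    have h4 := card_le_card capU
    rw [← hJ] at h2
    omega
  have hIJ : I ⊆ J := subset_union_left
  have hIJ2 : I' ⊆ J := subset_union_right
  rcases hcard with h | h
  · obtain ⟨I2, hs, c2⟩ := exists_subset_card_eq h
    have mono2 := monoU.mono (coe_subset.2 hs)
    have gd : ∀ I₀ ⊆ J, ∀ a ∈ I2 \ I₀, ∀ b ∈ I₀ \ I2, b < a → ¬ w a < w b :=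
      fun I₀ h0 a ha b hb hba =>
        (mem_filter.1 (hs (mem_sdiff.1 ha).1)).2 b (h0 (mem_sdiff.1 hb).1) hba
    rw [← eq_of_good hF hm hV c2 cI mono2 hI (gd I hIJ),
      eq_of_good hF hm hV c2 cI' mono2 hI' (gd I' hIJ2)]
  · obtain ⟨I2, hs, c2⟩ := exists_subset_card_eq h
    have mono2 := monoL.mono (coe_subset.2 hs)
    have gd : ∀ I₀ ⊆ J, ∀ a ∈ I₀ \ I2, ∀ b ∈ I2 \ I₀, b < a → ¬ w a < w b :=
      fun I₀ h0 a ha b hb hba =>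
        (mem_filter.1 (hs (mem_sdiff.1 hb).1)).2 a (h0 (mem_sdiff.1 ha).1) hba
    rw [eq_of_good hF hm hV cI c2 hI mono2 (gd I hIJ),
      eq_of_good hF hm hV cI' c2 hI' mono2 (gd I' hIJ2)]

/-! ### Writing a special consistent function as a combination of permutations -/

/-- The indicator of the sets of cells contained in the graph of `w`. It is the function on sets of
cells that corresponds to the matrix `kron k n r w`. -/
def permInd (k : Type*) [CommRing k] {n : ℕ} (w : Equiv.Perm (Fin n))
    (h : Finset (Fin n × Fin n)) : k :=
  if ∀ p ∈ h, p.1 = w p.2 then 1 else 0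

theorem permInd_insert {k : Type*} [CommRing k] {n : ℕ} (w : Equiv.Perm (Fin n))
    (x y : Fin n) (h : Finset (Fin n × Fin n)) :
    permInd k w (insert (x, y) h) = if x = w y then permInd k w h else 0 := by
  unfold permInd
  by_cases hx : x = w y <;> simp [hx]

theorem isConsistent_permInd (k : Type*) [CommRing k] {n : ℕ} (m : ℕ) (w : Equiv.Perm (Fin n)) :
    IsConsistent m (permInd k w) where
  inj h hh := by
    have hall : ∀ p ∈ h, p.1 = w p.2 := by
      by_contra hn
      exact hh (if_neg hn)
    intro p hp q hq
    rw [hall p hp, hall q hq, w.injective.eq_iff]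
  col g _ y := by simp [permInd_insert]
  row g _ x := by
    simp only [permInd_insert, ← Equiv.symm_apply_eq (e := w)]
    simp

theorem IsConsistent.sub_smul {k : Type*} [CommRing k] {n m : ℕ}
    {F G : Finset (Fin n × Fin n) → k} (hF : IsConsistent m F) (hG : IsConsistent m G) (c : k) :
    IsConsistent m (fun h => F h - c * G h) where
  inj h hh := by
    by_cases h1 : F h = 0
    · by_cases h2 : G h = 0
      · simp [h1, h2] at hh
      · exact hG.inj h h2
    · exact hF.inj h h1
  col g hg y := by rw [hF.col g hg y, hG.col g hg y, mul_sum, sum_sub_distrib]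
  row g hg x := by rw [hF.row g hg x, hG.row g hg x, mul_sum, sum_sub_distrib]

/-- `F` is supported on sets of cells which meet the row `l` and the column `l` at most in the cell
`(l, l)`. -/
def IsSpecial {k : Type*} [CommRing k] {n : ℕ} (l : Fin n)
    (F : Finset (Fin n × Fin n) → k) : Prop :=
  ∀ h, F h ≠ 0 → ∀ p ∈ h, p.1 = l ↔ p.2 = l

/-- For a special `F` only permutations fixing the last point `l` matter. If `F` is nonzero at a
restriction of `w` with `w l ≠ l`, then `l` and `w⁻¹ l` are both free columns, and `w` is not
increasing on them. -/
theorem IsSpecial.vanishes {k : Type*} [CommRing k] {n m : ℕ} {l : Fin n} (hl : ∀ c, c ≤ l)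
    {F : Finset (Fin n × Fin n) → k} (hF : IsSpecial l F) {w : Equiv.Perm (Fin n)}
    (hw : w l ≠ l) : Vanishes m F w := by
  intro I _ hI
  by_contra h0
  have hiff : ∀ c, c ∉ I → (w c = l ↔ c = l) := fun c hc =>
    hF _ h0 (w c, c) (mem_image.2 ⟨c, mem_compl.2 hc, rfl⟩)
  have hlI : l ∈ I := by
    by_contra hn
    exact hw ((hiff l hn).2 rfl)
  obtain ⟨y, hy⟩ := w.surjective l
  have hyl : y ≠ l := fun h => hw (h ▸ hy)
  have hyI : y ∈ I := by
    by_contra hn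
    exact hyl ((hiff y hn).1 hy)
  have := hI hyI hlI (lt_of_le_of_ne (hl y) hyl)
  rw [hy] at this
  exact absurd (hl (w l)) (not_le.2 this)

theorem IsSpecial.sub_permInd {k : Type*} [CommRing k] {n : ℕ} {l : Fin n}
    {F : Finset (Fin n × Fin n) → k} (hF : IsSpecial l F) {w : Equiv.Perm (Fin n)}
    (hw : w l = l) (c : k) : IsSpecial l (fun h => F h - c * permInd k w h) := by
  intro h hh p hp
  by_cases h1 : F h = 0
  · by_cases h2 : ∀ p ∈ h, p.1 = w p.2
    · rw [h2 p hp]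
      constructor
      · intro e; exact w.injective (e.trans hw.symm)
      · intro e; rw [e, hw]
    · exact absurd (by simp only [h1, permInd, if_neg h2, mul_zero, sub_zero]) hh
  · exact hF h h1 p hp

/-- `permInd k w` vanishes at all permutations lexicographically greater than `w`: the increasing
completion of a part of the graph of `w` is at most `w`. -/
theorem vanishes_permInd {k : Type*} [CommRing k] {n m : ℕ} {w w' : Equiv.Perm (Fin n)}
    (hlt : toLex (w : Fin n → Fin n) < toLex (w' : Fin n → Fin n)) :
    Vanishes m (permInd k w) w' := by
  intro I _ hI
  refine if_neg fun hall => ?_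
  have hag : ∀ c, c ∉ I ∪ I → w c = w' c := fun c hc =>
    (hall (w' c, c) (mem_image.2 ⟨c, by simpa using hc, rfl⟩)).symm
  exact not_lex_lt hI hI (by simp) hag (by simp) hlt

theorem permInd_permGraph (k : Type*) [CommRing k] {n : ℕ} (w : Equiv.Perm (Fin n))
    (S : Finset (Fin n)) : permInd k w (permGraph w S) = 1 := by
  refine if_pos fun p hp => ?_
  obtain ⟨c, _, rfl⟩ := mem_image.1 hp
  rfl

/-- Every set of `m` cells in the support has an increasing completion, which gives the case `d = 0`;
smaller sets are reduced to it by expansion along a column. -/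
theorem eq_zero_of_vanishes {k : Type*} [CommRing k] {n m : ℕ} (hm : m ≤ n)
    {F : Finset (Fin n × Fin n) → k} (hF : IsConsistent m F) (hV : ∀ w, Vanishes m F w) :
    ∀ (d : ℕ) (h : Finset (Fin n × Fin n)), h.card + d = m → F h = 0 := by
  intro d
  induction d with
  | zero =>
    intro h hc
    by_contra h0
    obtain ⟨w, I, cI, hI, rfl⟩ := exists_perm_of_isPartialInj (hF.inj h h0)
    exact h0 (hV w I (by rw [cI, ← hc, Nat.add_zero]) hI)
  | succ d ih =>
    intro h hc
    obtain ⟨y, hy⟩ : ∃ y, y ∉ h.image Prod.snd := by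
      by_contra! hn
      have h1 : (h.image Prod.snd).card = n := by
        rw [eq_univ_of_forall hn, card_univ, Fintype.card_fin]
      have h2 : (h.image Prod.snd).card ≤ h.card := card_image_le
      omega
    rw [hF.col h (by omega) y]
    refine sum_eq_zero fun x _ => ih _ ?_
    rw [card_insert_of_notMem fun hn => hy (mem_image.2 ⟨_, hn, rfl⟩)]
    omega

/-- Well-founded induction on a bound `u` from which on `F` vanishes: subtracting a multiple of
`permInd k w` for the lexicographically greatest `w` at which `F` does not vanish lowers the bound
to `w`. -/
theorem exists_coeff_aux {k : Type*} [CommRing k] {n m : ℕ} (hm : m ≤ n) {l : Fin n}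
    (hl : ∀ c, c ≤ l) (u : WithTop (Lex (Fin n → Fin n))) :
    ∀ F : Finset (Fin n × Fin n) → k, IsConsistent m F → IsSpecial l F →
      (∀ w : Equiv.Perm (Fin n), u ≤ (toLex (w : Fin n → Fin n) : Lex (Fin n → Fin n)) →
        Vanishes m F w) →
      ∃ c : Equiv.Perm (Fin n) → k, (∀ w, w l ≠ l → c w = 0) ∧
        ∀ h, h.card ≤ m → F h = ∑ w, c w * permInd k w h := by
  induction u using WellFoundedLT.induction with
  | _ u ih =>
    intro F hF hS hV
    classical
    by_cases hne : (univ.filter fun w => ¬ Vanishes m F w).Nonempty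
    · obtain ⟨w, hw, hmax⟩ := exists_max_image _
        (fun w : Equiv.Perm (Fin n) => toLex (w : Fin n → Fin n)) hne
      have hwV : ¬ Vanishes m F w := (mem_filter.1 hw).2
      have hwl : w l = l := by
        by_contra h
        exact hwV (hS.vanishes hl h)
      have hgt : ∀ w' : Equiv.Perm (Fin n),
          toLex (w : Fin n → Fin n) < toLex (w' : Fin n → Fin n) → Vanishes m F w' := by
        intro w' hlt
        by_contra hn
        exact absurd (hmax w' (mem_filter.2 ⟨mem_univ _, hn⟩)) (not_le.2 hlt)
      obtain ⟨I, cI, hI, -⟩ : ∃ I : Finset (Fin n), I.card = n - m ∧ StrictMonoOn w I ∧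
          F (permGraph w Iᶜ) ≠ 0 := by
        simpa [Vanishes] using hwV
      set a := F (permGraph w Iᶜ) with ha
      obtain ⟨c, hc, hFc⟩ := ih (toLex (w : Fin n → Fin n) : Lex (Fin n → Fin n))
        (by
          by_contra hn
          exact hwV (hV w (not_lt.1 hn)))
        (fun h => F h - a * permInd k w h)
        (hF.sub_smul (isConsistent_permInd k m w) a) (hS.sub_permInd hwl a) (by
          intro w' hle J cJ hJ
          rcases (WithTop.coe_le_coe.1 hle).eq_or_lt with he | hlt
          · obtain rfl : w = w' := DFunLike.coe_injective (toLex.injective he)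
            simp only [permInd_permGraph, mul_one]
            rw [eq_of_strictMonoOn hF hm hgt cJ cI hJ hI, sub_self]
          · simp only [hgt w' hlt J cJ hJ, vanishes_permInd hlt J cJ hJ, mul_zero, sub_zero])
      refine ⟨fun w' => c w' + if w' = w then a else 0, ?_, ?_⟩
      · intro w' hw'
        have : w' ≠ w := fun h => hw' (h ▸ hwl)
        simp [this, hc w' hw']
      · intro h hh
        have := hFc h hh
        simp only [add_mul, sum_add_distrib, ite_mul, zero_mul, sum_ite_eq', mem_univ, if_true]
        rw [← this]; ring
    · have hall : ∀ w, Vanishes m F w := by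
        intro w
        by_contra hn
        exact hne ⟨w, mem_filter.2 ⟨mem_univ _, hn⟩⟩
      refine ⟨0, by simp, fun h hh => ?_⟩
      simp [eq_zero_of_vanishes hm hF hall (m - h.card) h (by omega)]

/-- A special consistent function is, on sets of at most `m` cells, a linear combination of the
indicators of permutations fixing the last point. -/
theorem exists_coeff {k : Type*} [CommRing k] {n m : ℕ} (hm : m ≤ n) {l : Fin n}
    (hl : ∀ c, c ≤ l) {F : Finset (Fin n × Fin n) → k} (hF : IsConsistent m F)
    (hS : IsSpecial l F) :
    ∃ c : Equiv.Perm (Fin n) → k, (∀ w, w l ≠ l → c w = 0) ∧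
      ∀ h, h.card ≤ m → F h = ∑ w, c w * permInd k w h :=
  exists_coeff_aux hm hl ⊤ F hF hS fun _ hw =>
    absurd (top_le_iff.1 hw) WithTop.coe_ne_top

/-! ### From invariant matrices to consistent functions -/

/-- The entry of `A` whose row and column multi-indices are given together, as a sequence of cells. -/
def entry {k : Type*} [CommRing k] {n r : ℕ} (A : Matrix (Fin r → Fin n) (Fin r → Fin n) k)
    (p : Fin r → Fin n × Fin n) : k :=
  A (fun α => (p α).1) fun α => (p α).2

theorem entry_update {k : Type*} [CommRing k] {n r : ℕ}
    (A : Matrix (Fin r → Fin n) (Fin r → Fin n) k) (p : Fin r → Fin n × Fin n) (α : Fin r)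
    (x y : Fin n) : entry A (Function.update p α (x, y)) =
      A (Function.update (fun β => (p β).1) α x) (Function.update (fun β => (p β).2) α y) := by
  unfold entry
  congr 1 <;> ext β <;> by_cases h : β = α <;> simp [h]

theorem entry_ne_zero {k : Type*} [CommRing k] {n r : ℕ}
    {A : Matrix (Fin r → Fin n) (Fin r → Fin n) k} (hH : CondH k n r A)
    {p : Fin r → Fin n × Fin n} (h0 : entry A p ≠ 0) (α β : Fin r) :
    (p α).1 = (p β).1 ↔ (p α).2 = (p β).2 := by
  by_contra hn
  refine h0 (hH _ _ fun hv => hn ?_)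
  exact iff_of_eq (congrFun (congrFun hv α) β)

/-- If the cell at place `α` also occurs at another place, the slice sums at `α` have only one nonzero
term, so that their common value is the entry itself. -/
theorem sum_entry_of_dup {k : Type*} [CommRing k] {n r : ℕ}
    {A : Matrix (Fin r → Fin n) (Fin r → Fin n) k} (hA : MemE k n r A)
    (p : Fin r → Fin n × Fin n) {α β : Fin r} (hne : β ≠ α) (hp : p β = p α) :
    (∀ y, ∑ x, entry A (Function.update p α (x, y)) = entry A p) ∧
      ∀ x, ∑ y, entry A (Function.update p α (x, y)) = entry A p := by
  obtain ⟨b, hb1, hb2⟩ := hA.1 α (fun β => (p β).1) (fun β => (p β).2)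
  simp only [← entry_update] at hb1 hb2
  have hb : b = entry A p := by
    rw [← hb1 (p α).2, sum_eq_single (p α).1]
    · rw [Prod.mk.eta, Function.update_eq_self]
    · intro x _ hx
      by_contra h0
      have := (entry_ne_zero hA.2.1 h0 α β).2 (by simp [hne, hp])
      simp [hne, hp] at this
      exact hx this
    · simp
  exact ⟨fun y => (hb1 y).trans hb, fun x => (hb2 x).trans hb⟩

/-- A repeated cell may be overwritten by any other cell of the sequence. -/
theorem entry_update_of_dup {k : Type*} [CommRing k] {n r : ℕ}
    {A : Matrix (Fin r → Fin n) (Fin r → Fin n) k} (hA : MemE k n r A)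
    (p : Fin r → Fin n × Fin n) {α β γ : Fin r} (hne : β ≠ α) (hp : p β = p α) (hγ : γ ≠ α) :
    entry A (Function.update p α (p γ)) = entry A p := by
  rw [← (sum_entry_of_dup hA p hne hp).1 (p γ).2, sum_eq_single (p γ).1]
  · intro x _ hx
    by_contra h0
    have := (entry_ne_zero hA.2.1 h0 α γ).2 (by simp [hγ])
    simp [hγ] at this
    exact hx this
  · simp

/-- An entry of an invariant matrix depends only on the set of cells. The induction is on the number of
places where the two sequences differ: at such a place the cell of `p` is either repeated, and can be
overwritten by that of `q`, or it is not, and a transposition of places moves it to where `q` has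
it. -/
theorem entry_eq_of_image_eq {k : Type*} [CommRing k] {n r : ℕ}
    {A : Matrix (Fin r → Fin n) (Fin r → Fin n) k} (hA : MemE k n r A) :
    ∀ (d : ℕ) (p q : Fin r → Fin n × Fin n), univ.image p = univ.image q →
      (univ.filter fun α => p α ≠ q α).card = d → entry A p = entry A q := by
  intro d
  induction d using Nat.strong_induction_on with
  | _ d ih =>
    intro p q himg hd
    by_cases hpq : ∀ α, p α = q α
    · rw [funext hpq]
    push Not at hpq
    obtain ⟨α, hα⟩ := hpq
    by_cases hdup : ∃ β, β ≠ α ∧ p β = p α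
    · obtain ⟨β, hβ, hp⟩ := hdup
      obtain ⟨γ, -, hγ⟩ : ∃ γ ∈ univ, p γ = q α := by
        rw [← mem_image, himg]; exact mem_image_of_mem _ (mem_univ _)
      have hγα : γ ≠ α := fun h => hα (h ▸ hγ)
      rw [← entry_update_of_dup hA p hβ hp hγα]
      refine ih _ ?_ _ q ?_ rfl
      · rw [← hd]
        refine card_lt_card ((ssubset_iff_of_subset ?_).2 ⟨α, by simp [hα], by simp [hγ]⟩)
        intro δ hδ
        by_cases h : δ = α
        · subst h; simp [hα]
        · simpa [h] using hδ
      · rw [← himg]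
        ext z
        simp only [mem_image, mem_univ, true_and]
        constructor
        · rintro ⟨δ, rfl⟩
          by_cases h : δ = α
          · exact ⟨γ, by simp [h]⟩
          · exact ⟨δ, by simp [h]⟩
        · rintro ⟨δ, rfl⟩
          by_cases h : δ = α
          · exact ⟨β, by simp [h, hβ, hp]⟩
          · exact ⟨δ, by simp [h]⟩
    · push Not at hdup
      obtain ⟨β, -, hβ⟩ : ∃ β ∈ univ, q β = p α := by
        rw [← mem_image, ← himg]; exact mem_image_of_mem _ (mem_univ _)
      have hβα : β ≠ α := fun h => hα (by rw [← hβ, h])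
      have hpβ : p β ≠ q β := by rw [hβ]; exact hdup β hβα
      have hsw : entry A (p ∘ Equiv.swap α β) = entry A p :=
        hA.2.2 (Equiv.swap α β) (fun δ => (p δ).1) fun δ => (p δ).2
      rw [← hsw]
      refine ih _ ?_ _ q ?_ rfl
      · rw [← hd]
        refine card_lt_card ((ssubset_iff_of_subset ?_).2 ⟨β, by simp [hpβ], by simp [hβ]⟩)
        intro δ hδ
        by_cases h : δ = α
        · subst h; simp [hα]
        · by_cases h' : δ = β
          · subst h'; simp [hpβ]
          · simpa [Equiv.swap_apply_of_ne_of_ne h h'] using hδ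
      · rw [← himg]
        ext z
        simp only [mem_image, mem_univ, true_and, Function.comp_apply]
        exact (Equiv.swap α β).exists_congr_left.trans (by simp)

open Classical in
/-- The entry of `A` as a function of its set of cells. A set is the image of a sequence of `r ≥ 1`
cells when it is nonempty of size at most `r`. For larger sets the value is `0`, and for `∅`
it is the slice sum with column `y₀`, as column expansion of `∅` requires. -/
noncomputable def setEntry {k : Type*} [CommRing k] {n r : ℕ} (y₀ : Fin n)
    (A : Matrix (Fin r → Fin n) (Fin r → Fin n) k) (g : Finset (Fin n × Fin n)) : k :=
  if h : ∃ p : Fin r → Fin n × Fin n, univ.image p = g then entry A h.choose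
  else if g = ∅ then ∑ x, entry A fun _ => (x, y₀) else 0

theorem setEntry_image {k : Type*} [CommRing k] {n r : ℕ} (y₀ : Fin n)
    {A : Matrix (Fin r → Fin n) (Fin r → Fin n) k} (hA : MemE k n r A)
    (p : Fin r → Fin n × Fin n) : setEntry y₀ A (univ.image p) = entry A p := by
  have h : ∃ q : Fin r → Fin n × Fin n, univ.image q = univ.image p := ⟨p, rfl⟩
  rw [setEntry, dif_pos h]
  exact entry_eq_of_image_eq hA _ _ _ h.choose_spec rfl

theorem exists_image_eq {n r : ℕ} {g : Finset (Fin n × Fin n)} (hg : g.Nonempty)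
    (hc : g.card ≤ r) : ∃ p : Fin r → Fin n × Fin n, univ.image p = g := by
  obtain ⟨e⟩ : Nonempty (g ↪ Fin r) := Function.Embedding.nonempty_of_card_le (by simpa using hc)
  have : Nonempty g := hg.to_subtype
  refine ⟨fun α => (Function.invFun e α : g), ?_⟩
  ext z
  simp only [mem_image, mem_univ, true_and]
  constructor
  · rintro ⟨α, rfl⟩; exact Subtype.prop _
  · intro hz
    exact ⟨e ⟨z, hz⟩, by rw [Function.leftInverse_invFun e.injective]⟩

theorem image_update_of_dup {n r : ℕ} (p : Fin r → Fin n × Fin n) {α β : Fin r} (hne : β ≠ α)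
    (hp : p β = p α) (z : Fin n × Fin n) :
    univ.image (Function.update p α z) = insert z (univ.image p) := by
  ext u
  simp only [mem_image, mem_univ, true_and, mem_insert]
  constructor
  · rintro ⟨δ, rfl⟩
    by_cases h : δ = α
    · left; simp [h]
    · right; exact ⟨δ, by simp [h]⟩
  · rintro (rfl | ⟨δ, rfl⟩)
    · exact ⟨α, by simp⟩
    · by_cases h : δ = α
      · exact ⟨β, by simp [h, hne, hp]⟩
      · exact ⟨δ, by simp [h]⟩

/-- For fewer than `r` cells some cell is repeated, and condition (G) at its place becomes
the row and column expansion. -/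
theorem setEntry_sum {k : Type*} [CommRing k] {n r : ℕ} (y₀ : Fin n)
    {A : Matrix (Fin r → Fin n) (Fin r → Fin n) k} (hA : MemE k n r A)
    {g : Finset (Fin n × Fin n)} (hg : g.Nonempty) (hc : g.card < r) :
    (∀ y, setEntry y₀ A g = ∑ x, setEntry y₀ A (insert (x, y) g)) ∧
      ∀ x, setEntry y₀ A g = ∑ y, setEntry y₀ A (insert (x, y) g) := by
  obtain ⟨p, rfl⟩ := exists_image_eq hg hc.le
  obtain ⟨β, α, hp, hne⟩ : ∃ β α, p β = p α ∧ β ≠ α := by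
    by_contra! hn
    rw [card_image_of_injective _ fun a b h => hn a b h, card_univ, Fintype.card_fin] at hc
    exact lt_irrefl _ hc
  simp only [← image_update_of_dup p hne hp, setEntry_image y₀ hA]
  exact ⟨fun y => ((sum_entry_of_dup hA p hne hp).1 y).symm,
    fun x => ((sum_entry_of_dup hA p hne hp).2 x).symm⟩

theorem setEntry_empty {k : Type*} [CommRing k] {n r : ℕ} (hr : 1 ≤ r) (y₀ : Fin n)
    {A : Matrix (Fin r → Fin n) (Fin r → Fin n) k} (hA : MemE k n r A) :
    setEntry y₀ A ∅ = ∑ x, setEntry y₀ A {(x, y₀)} := by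
  have : Nonempty (Fin r) := ⟨⟨0, hr⟩⟩
  have h1 : ¬ ∃ p : Fin r → Fin n × Fin n, univ.image p = ∅ := by
    rintro ⟨p, hp⟩
    exact (univ_nonempty.image p).ne_empty hp
  rw [setEntry, dif_neg h1, if_pos rfl]
  refine sum_congr rfl fun x _ => ?_
  rw [← setEntry_image y₀ hA]
  congr 1
  exact image_const univ_nonempty _

/-- The function of an invariant matrix is consistent. For the empty set the expansions say that the
sums of the values on single cells over all rows and all columns agree: for `r = 1` this is
condition (G), and for `r ≥ 2` each of them is expanded along another row or column. -/
theorem isConsistent_setEntry {k : Type*} [CommRing k] {n r : ℕ} (hr : 1 ≤ r) (y₀ : Fin n)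
    {A : Matrix (Fin r → Fin n) (Fin r → Fin n) k} (hA : MemE k n r A) :
    IsConsistent r (setEntry y₀ A) := by
  have hempty : (∀ y, setEntry y₀ A ∅ = ∑ x, setEntry y₀ A {(x, y)}) ∧
      ∀ x, setEntry y₀ A ∅ = ∑ y, setEntry y₀ A {(x, y)} := by
    rw [setEntry_empty hr y₀ hA]
    rcases hr.eq_or_lt with rfl | hr2
    · obtain ⟨b, hb1, hb2⟩ := hA.1 0 (fun _ => y₀) fun _ => y₀
      have key : ∀ x y, setEntry y₀ A {(x, y)} =
          A (Function.update (fun _ => y₀) 0 x) (Function.update (fun _ => y₀) 0 y) := by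
        intro x y
        have : ({(x, y)} : Finset (Fin n × Fin n)) =
            univ.image (fun _ : Fin 1 => (x, y)) := (image_const univ_nonempty _).symm
        rw [this, setEntry_image y₀ hA, entry]
        congr 1 <;> ext β <;> simp [Subsingleton.elim β 0]
      simp only [key]
      exact ⟨fun y => (hb1 _).trans (hb1 _).symm, fun x => (hb1 _).trans (hb2 _).symm⟩
    · have hs : ∀ z : Fin n × Fin n, _ := fun z =>
        setEntry_sum y₀ hA (singleton_nonempty z) (by rw [card_singleton]; exact hr2)
      have hx : ∀ x, ∑ x', setEntry y₀ A {(x', y₀)} = ∑ y, setEntry y₀ A {(x, y)} := by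
        intro x
        rw [sum_congr rfl fun x' _ => (hs (x', y₀)).2 x, sum_comm]
        refine sum_congr rfl fun y _ => ?_
        rw [(hs (x, y)).1 y₀]
        exact sum_congr rfl fun x' _ => by rw [pair_comm]
      refine ⟨fun y => ?_, hx⟩
      rw [sum_congr rfl fun x' _ => (hs (x', y₀)).1 y, sum_comm]
      refine sum_congr rfl fun x _ => ?_
      rw [(hs (x, y)).1 y₀]
      exact sum_congr rfl fun x' _ => by rw [pair_comm]
  refine ⟨?_, ?_, ?_⟩
  · intro h h0
    rcases h.eq_empty_or_nonempty with rfl | hne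
    · intro p hp; simp at hp
    by_cases hex : ∃ p : Fin r → Fin n × Fin n, univ.image p = h
    · obtain ⟨p, rfl⟩ := hex
      rw [setEntry_image y₀ hA] at h0
      intro a ha b hb
      obtain ⟨α, -, rfl⟩ := mem_image.1 ha
      obtain ⟨β, -, rfl⟩ := mem_image.1 hb
      exact entry_ne_zero hA.2.1 h0 α β
    · exact absurd (by rw [setEntry, dif_neg hex, if_neg hne.ne_empty]) h0
  · intro g hg y
    rcases g.eq_empty_or_nonempty with rfl | hne
    · exact hempty.1 y
    · exact (setEntry_sum y₀ hA hne hg).1 y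
  · intro g hg x
    rcases g.eq_empty_or_nonempty with rfl | hne
    · exact hempty.2 x
    · exact (setEntry_sum y₀ hA hne hg).2 x

theorem isSpecial_setEntry {k : Type*} [CommRing k] {n r : ℕ} (l y₀ : Fin n)
    {A : Matrix (Fin r → Fin n) (Fin r → Fin n) k} (hA : MemESpec k n r l l A) :
    IsSpecial l (setEntry y₀ A) := by
  intro h h0 z hz
  by_cases hex : ∃ p : Fin r → Fin n × Fin n, univ.image p = h
  · obtain ⟨p, rfl⟩ := hex
    rw [setEntry_image y₀ hA.1] at h0
    obtain ⟨α, -, rfl⟩ := mem_image.1 hz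
    exact hA.2 _ _ h0 α
  · exact absurd (by rw [setEntry, dif_neg hex, if_neg (Finset.ne_empty_of_mem hz)]) h0

theorem IsConsistent.mono {k : Type*} [CommRing k] {n m m' : ℕ} (hm : m ≤ m')
    {F : Finset (Fin n × Fin n) → k} (hF : IsConsistent m' F) : IsConsistent m F :=
  ⟨hF.inj, fun g hg => hF.col g (hg.trans_le hm), fun g hg => hF.row g (hg.trans_le hm)⟩

theorem permInd_image {k : Type*} [CommRing k] {n r : ℕ} (w : Equiv.Perm (Fin n))
    (i j : Fin r → Fin n) :
    permInd k w (univ.image fun α => (i α, j α)) = kron k n r w i j := by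
  unfold permInd kron
  rw [Matrix.of_apply]
  congr 1
  simp [funext_iff]

/-! ### The spanning matrices, and the duality -/

theorem memESpec_kron {k : Type*} [CommRing k] {n r : ℕ} {l : Fin n} {w : Equiv.Perm (Fin n)}
    (hw : w l = l) : MemESpec k n r l l (kron k n r w) := by
  have hk : ∀ i j, kron k n r w i j ≠ 0 → i = w ∘ j := by
    intro i j h
    by_contra hn
    exact h (if_neg hn)
  refine ⟨⟨?_, ?_, ?_⟩, ?_⟩
  · intro α i j
    have key : ∀ x y, kron k n r w (Function.update i α x) (Function.update j α y) =
        if x = w y then (if ∀ β, β ≠ α → i β = w (j β) then 1 else 0) else 0 := by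
      intro x y
      rw [kron, Matrix.of_apply, ← ite_and]
      congr 1
      rw [eq_iff_iff, funext_iff]
      constructor
      · intro h
        refine ⟨by simpa using h α, fun β hβ => by simpa [hβ] using h β⟩
      · rintro ⟨h1, h2⟩ β
        by_cases hβ : β = α
        · subst hβ; simpa using h1
        · simpa [hβ] using h2 β hβ
    refine ⟨if ∀ β, β ≠ α → i β = w (j β) then 1 else 0, fun y => ?_, fun x => ?_⟩
    · simp only [key]; simp
    · simp only [key, ← Equiv.symm_apply_eq (e := w)]; simp
  · intro i j hv
    by_contra h
    refine hv ?_
    rw [hk i j h]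
    funext a b
    simp [vt]
  · intro σ i j
    rw [kron, Matrix.of_apply, Matrix.of_apply]
    congr 1
    rw [eq_iff_iff, ← Function.comp_assoc]
    exact σ.surjective.injective_comp_right.eq_iff
  · intro s t h α
    rw [hk s t h, Function.comp_apply]
    constructor
    · intro e; exact w.injective (e.trans hw.symm)
    · intro e; rw [e, hw]

theorem memESpec_add {k : Type*} [CommRing k] {n r : ℕ} {l : Fin n}
    {A B : Matrix (Fin r → Fin n) (Fin r → Fin n) k} (hA : MemESpec k n r l l A)
    (hB : MemESpec k n r l l B) : MemESpec k n r l l (A + B) := by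
  refine ⟨⟨fun α i j => ?_, fun i j h => ?_, fun σ i j => ?_⟩, fun s t h => ?_⟩
  · obtain ⟨a, ha1, ha2⟩ := hA.1.1 α i j
    obtain ⟨b, hb1, hb2⟩ := hB.1.1 α i j
    exact ⟨a + b, fun y => by simp [sum_add_distrib, ha1, hb1],
      fun x => by simp [sum_add_distrib, ha2, hb2]⟩
  · simp [hA.1.2.1 i j h, hB.1.2.1 i j h]
  · simp [hA.1.2.2 σ i j, hB.1.2.2 σ i j]
  · by_cases h1 : A s t = 0
    · by_cases h2 : B s t = 0
      · simp [h1, h2] at h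
      · exact hB.2 s t h2
    · exact hA.2 s t h1

theorem memESpec_smul {k : Type*} [CommRing k] {n r : ℕ} {l : Fin n} (c : k)
    {A : Matrix (Fin r → Fin n) (Fin r → Fin n) k} (hA : MemESpec k n r l l A) :
    MemESpec k n r l l (c • A) := by
  refine ⟨⟨fun α i j => ?_, fun i j h => ?_, fun σ i j => ?_⟩, fun s t h => ?_⟩
  · obtain ⟨a, ha1, ha2⟩ := hA.1.1 α i j
    exact ⟨c * a, fun y => by simp [← mul_sum, ha1], fun x => by simp [← mul_sum, ha2]⟩
  · simp [hA.1.2.1 i j h]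
  · simp [hA.1.2.2 σ i j]
  · refine hA.2 s t fun h1 => h (by simp [h1])

theorem memESpec_zero {k : Type*} [CommRing k] {n r : ℕ} {l : Fin n} :
    MemESpec k n r l l (0 : Matrix (Fin r → Fin n) (Fin r → Fin n) k) :=
  ⟨⟨fun _ _ _ => ⟨0, by simp, by simp⟩, fun _ _ _ => rfl, fun _ _ _ => rfl⟩,
    fun _ _ h => absurd rfl h⟩

/-- Schur–Weyl duality for the half partition algebra: for a commutative ring `k`,
`n ≥ 2` and `r ≥ 1`, the k-module `E_k(n,r)^n_n` of special invariants (isomorphic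
to the centralizer of the half partition algebra `P_{r+1/2}(n)` on `(k^n)^{⊗r}`)
equals the k-linear span of the matrices `P(w)^{⊗r}` for `w ∈ S_n` with `w(n) = n`. -/
theorem stmt_12 {k : Type*} [CommRing k] {n r : ℕ} (hn : 2 ≤ n) (hr : 1 ≤ r) :
    {A : Matrix (Fin r → Fin n) (Fin r → Fin n) k |
        MemESpec k n r ⟨n-1, by omega⟩ ⟨n-1, by omega⟩ A} =
      (Submodule.span k
        ((fun w : Equiv.Perm (Fin n) => kron k n r w) ''
          {w : Equiv.Perm (Fin n) | w ⟨n-1, by omega⟩ = ⟨n-1, by omega⟩}) : Set _) := by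
  ext A
  rw [Set.mem_ofPred_eq, SetLike.mem_coe]
  have hl : ∀ c : Fin n, c ≤ ⟨n - 1, by omega⟩ := fun c => Fin.mk_le_mk.2 (by omega)
  generalize (⟨n - 1, by omega⟩ : Fin n) = l at hl ⊢
  constructor
  · intro hA
    have hF := isConsistent_setEntry hr l hA.1
    -- A partial injection on `n` rows has at most `n` cells, hence the truncation to `min r n`.
    obtain ⟨c, hc, hFc⟩ := exists_coeff (min_le_right r n) hl (hF.mono (min_le_left r n))
      (isSpecial_setEntry l l hA)
    have hAe : A = ∑ w, c w • kron k n r w := by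
      ext i j
      rw [Matrix.sum_apply]
      simp only [Matrix.smul_apply, smul_eq_mul, ← permInd_image]
      have h1 : setEntry l A (univ.image fun α => (i α, j α)) = A i j := setEntry_image l hA.1 _
      rw [← h1]
      by_cases hinj : IsPartialInj (univ.image fun α => (i α, j α))
      · refine hFc _ (le_min ?_ ?_)
        · exact card_image_le.trans (by simp)
        · refine (card_le_of_isPartialInj (R := univ) (K := univ) hinj (by simp)).trans (by simp)
      · have h2 : setEntry l A (univ.image fun α => (i α, j α)) = 0 := by
          by_contra h0
          exact hinj (hF.inj _ h0)
        rw [h2]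
        refine (sum_eq_zero fun w _ => ?_).symm
        have h3 : permInd k w (univ.image fun α => (i α, j α)) = 0 := by
          by_contra h0
          exact hinj ((isConsistent_permInd k r w).inj _ h0)
        rw [h3, mul_zero]
    rw [hAe]
    refine Submodule.sum_mem _ fun w _ => ?_
    by_cases hw : w l = l
    · exact Submodule.smul_mem _ _ (Submodule.subset_span ⟨w, hw, rfl⟩)
    · rw [hc w hw, zero_smul]; exact Submodule.zero_mem _
  · intro hA
    induction hA using Submodule.span_induction with
    | mem B hB =>
      obtain ⟨w, hw, rfl⟩ := hB
      exact memESpec_kron hw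
    | zero => exact memESpec_zero
    | add B C _ _ hB hC => exact memESpec_add hB hC
    | smul c B _ hB => exact memESpec_smul c hB
end
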